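/- Let π < φ < 2π with φ ≠ 3π/2 and r > 0. Then for every l > 0 with l·|sin φ| < r, the function l ↦ −l + r/2 − (l·cos φ/(2r))·√(r² − (l·sin φ)²) + (l·sin φ)²/(2r) − (r/(2·tan φ))·(φ − π + arcsin(l·sin φ/r)) is differentiable at l with derivative (1/r)·(−r + l·sin² φ − √(r² − (l·sin φ)²)·cos φ). -/

import Mathlib

open Real

/-!
With `x = l sin φ`, the square root and arcsine terms combine into `-1 / (2 r tan φ)` times
`x √(r² - x²) + r² arcsin (x / r)`. The latter is twice the area under the circle of radius `r`
over `[0, x]`, so its derivative in `x` is `2 √(r² - x²)`. The remaining terms form a quadratic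
polynomial in `l`.
-/

theorem sqrt_one_sub_div_sq {r : ℝ} (hr : 0 < r) (x : ℝ) :
    √(1 - (x / r) ^ 2) = √(r ^ 2 - x ^ 2) / r := by
  have h : 1 - (x / r) ^ 2 = (r ^ 2 - x ^ 2) / r ^ 2 := by field_simp
  rw [h, sqrt_div' _ (sq_nonneg r), sqrt_sq hr.le]

theorem hasDerivAt_arcsin_div {r x : ℝ} (hx : |x| < r) :
    HasDerivAt (fun x ↦ arcsin (x / r)) (1 / √(r ^ 2 - x ^ 2)) x := by
  have hr : 0 < r := (abs_nonneg x).trans_lt hx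
  obtain ⟨hlo, hhi⟩ := abs_lt.mp hx
  have hne_neg : x / r ≠ -1 := ((lt_div_iff₀ hr).mpr (by linarith)).ne'
  have hne_one : x / r ≠ 1 := ((div_lt_one hr).mpr hhi).ne
  refine ((hasDerivAt_arcsin hne_neg hne_one).comp x
    ((hasDerivAt_id' x).div_const r)).congr_deriv ?_
  rw [sqrt_one_sub_div_sq hr]
  field_simp

theorem hasDerivAt_sqrt_sq_sub_sq {r x : ℝ} (hx : r ^ 2 - x ^ 2 ≠ 0) :
    HasDerivAt (fun x ↦ √(r ^ 2 - x ^ 2)) (-x / √(r ^ 2 - x ^ 2)) x := by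
  refine (((hasDerivAt_pow 2 x).const_sub (r ^ 2)).sqrt hx).congr_deriv ?_
  simp only [Nat.cast_ofNat, Nat.add_one_sub_one, pow_one]
  ring

theorem hasDerivAt_mul_sqrt_add_sq_mul_arcsin_div {r x : ℝ} (hx : |x| < r) :
    HasDerivAt (fun x ↦ x * √(r ^ 2 - x ^ 2) + r ^ 2 * arcsin (x / r))
      (2 * √(r ^ 2 - x ^ 2)) x := by
  have hpos : 0 < r ^ 2 - x ^ 2 := sub_pos.mpr (sq_lt_sq.mpr (hx.trans_le (le_abs_self r)))
  have hsqrt : √(r ^ 2 - x ^ 2) ≠ 0 := (sqrt_pos.mpr hpos).ne'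
  have hsq : √(r ^ 2 - x ^ 2) ^ 2 = r ^ 2 - x ^ 2 := sq_sqrt hpos.le
  refine (((hasDerivAt_id' x).mul (hasDerivAt_sqrt_sq_sub_sq hpos.ne')).add
    ((hasDerivAt_arcsin_div hx).const_mul (r ^ 2))).congr_deriv ?_
  field_simp [hsqrt]
  linear_combination -hsq

theorem tan_ne_zero_of_pi_lt_of_lt_two_pi {φ : ℝ} (hφ_gt : π < φ) (hφ_lt : φ < 2 * π)
    (hφ_ne : φ ≠ 3 * π / 2) : tan φ ≠ 0 := by
  rw [tan_ne_zero_iff]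
  rintro k rfl
  have hk_gt : (2 : ℝ) < k := by nlinarith [pi_pos]
  have hk_lt : (k : ℝ) < 4 := by nlinarith [pi_pos]
  norm_cast at hk_gt hk_lt
  obtain rfl : k = 3 := by lia
  exact hφ_ne (by norm_num)

theorem hasDerivAt_dPhidr_l_general {φ r l : ℝ} (hφ : tan φ ≠ 0) (hl : |l * sin φ| < r) :
    HasDerivAt (fun l : ℝ ↦
        -l + r / 2
          - (l * cos φ / (2 * r)) * √(r ^ 2 - (l * sin φ) ^ 2)
          + (l * sin φ) ^ 2 / (2 * r)
          - (r / (2 * tan φ)) * (φ - π + arcsin (l * sin φ / r)))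
      ((1 / r) * (-r + l * sin φ ^ 2 - √(r ^ 2 - (l * sin φ) ^ 2) * cos φ)) l := by
  have hr : 0 < r := (abs_nonneg _).trans_lt hl
  have hsin : sin φ ≠ 0 := (div_ne_zero_iff.mp (tan_eq_sin_div_cos φ ▸ hφ)).1
  have hx : HasDerivAt (fun l ↦ l * sin φ) (sin φ) l := hasDerivAt_mul_const (sin φ)
  have harea : HasDerivAt
      (fun l ↦ l * sin φ * √(r ^ 2 - (l * sin φ) ^ 2) + r ^ 2 * arcsin (l * sin φ / r))
      (2 * √(r ^ 2 - (l * sin φ) ^ 2) * sin φ) l := by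
    simpa only [Function.comp_def] using (hasDerivAt_mul_sqrt_add_sq_mul_arcsin_div hl).comp l hx
  have hpoly : HasDerivAt
      (fun l ↦ -l + (l * sin φ) ^ 2 / (2 * r) + (r / 2 - r / (2 * tan φ) * (φ - π)))
      (-1 + l * sin φ ^ 2 / r) l := by
    refine (((hasDerivAt_neg l).add ((hx.fun_pow 2).div_const (2 * r))).add_const _).congr_deriv ?_
    field_simp
    ring
  refine ((hpoly.fun_sub (harea.const_mul (1 / (2 * r * tan φ)))).congr_deriv
    ?_).congr_of_eventuallyEq (.of_forall fun l ↦ ?_)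
  · rw [tan_eq_sin_div_cos]
    field_simp
  · rw [tan_eq_sin_div_cos]
    field_simp
    ring

/-- For `π < φ < 2π`, `φ ≠ 3π/2`, `r > 0` and every `l > 0` with `l·|sin φ| < r`, the
function
`l ↦ −l + r/2 − (l cos φ/(2r))√(r² − (l sin φ)²) + (l sin φ)²/(2r)
     − (r/(2 tan φ))(φ − π + arcsin(l sin φ/r))`
(which is `∂Φ/∂r`) is differentiable at `l` with derivative
`(1/r)(−r + l sin² φ − √(r² − (l sin φ)²) cos φ)`. -/
theorem hasDerivAt_dPhidr_l (φ r : ℝ) (h1 : π < φ) (h2 : φ < 2 * π) (h3 : φ ≠ 3 * π / 2)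
    (hr : 0 < r) :
    ∀ l : ℝ, 0 < l → l * |Real.sin φ| < r →
      HasDerivAt (fun l : ℝ =>
          -l + r / 2
            - (l * Real.cos φ / (2 * r)) * Real.sqrt (r ^ 2 - (l * Real.sin φ) ^ 2)
            + (l * Real.sin φ) ^ 2 / (2 * r)
            - (r / (2 * Real.tan φ)) * (φ - π + Real.arcsin (l * Real.sin φ / r)))
        ((1 / r) * (-r + l * Real.sin φ ^ 2
          - Real.sqrt (r ^ 2 - (l * Real.sin φ) ^ 2) * Real.cos φ)) l := by
  intro l hl hlr
  have habs : |l * sin φ| < r := by rwa [abs_mul, abs_of_pos hl]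
  exact hasDerivAt_dPhidr_l_general (tan_ne_zero_of_pi_lt_of_lt_two_pi h1 h2 h3) habs
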